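/- arXiv:1803.00444 — 5 statements merged into one kernel-verified Lean document; each statement's English description precedes it below -/
import Mathlib

section
/- (Proposition 1, Affine Invariance) For every finite MDP with discount factor γ ∈ [0,1), every x ∈ (0,∞), every y ∈ ℝ, and every state s and action a such that Q*_R(s,·) is non-constant on A, the function Q*_{xR+y}(s,·) is also non-constant on A and the normalized state-action values coincide: Q^•_R(s,a) = Q^•_{xR+y}(s,a). -/
/-!
Write `B r` for the Bellman optimality operator with reward `r`. Maxima and averages commute with an
increasing affine map `φ t = x * t + c`, so `φ` carries `B r` to `B (x * r + (1 - γ) * c)` and sends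
fixed points of the former to fixed points of the latter. For `c = y / (1 - γ)` the latter reward is
`x * r + y`; as `B` is a `|γ|`-contraction, its fixed point is unique, so the optimal values for
`x * r + y` are the image under `φ` of those for `r`. Min-max normalization cancels `φ`.
-/

open Finset

section OrderedGroup

variable {ι K : Type*} [AddCommGroup K] [LinearOrder K] [IsOrderedAddMonoid K]

theorem sup'_sub_sup'_le {s : Finset ι} (hs : s.Nonempty) {f g : ι → K} {c : K}
    (h : ∀ i ∈ s, f i - g i ≤ c) : s.sup' hs f - s.sup' hs g ≤ c :=
  sub_le_iff_le_add.2 <| sup'_le hs f fun i hi =>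
    (sub_le_iff_le_add.1 (h i hi)).trans (add_le_add_right (le_sup' g hi) c)

theorem abs_sup'_sub_sup'_le {s : Finset ι} (hs : s.Nonempty) {f g : ι → K} {c : K}
    (h : ∀ i ∈ s, |f i - g i| ≤ c) : |s.sup' hs f - s.sup' hs g| ≤ c :=
  abs_sub_le_iff.2 ⟨sup'_sub_sup'_le hs fun i hi => (abs_sub_le_iff.1 (h i hi)).1,
    sup'_sub_sup'_le hs fun i hi => (abs_sub_le_iff.1 (h i hi)).2⟩

end OrderedGroup

section WeightedSum

variable {ι K : Type*} {s : Finset ι} {w : ι → K}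

theorem sum_mul_affine [CommSemiring K] (hw : ∑ i ∈ s, w i = 1) (f : ι → K) (x c : K) :
    ∑ i ∈ s, w i * (x * f i + c) = x * ∑ i ∈ s, w i * f i + c := by
  simp only [mul_add, sum_add_distrib, ← sum_mul, hw, one_mul, mul_sum, mul_left_comm]

theorem abs_sum_mul_sub_sum_mul_le [CommRing K] [LinearOrder K] [IsStrictOrderedRing K]
    (hw₀ : ∀ i ∈ s, 0 ≤ w i) (hw₁ : ∑ i ∈ s, w i = 1) {f g : ι → K} {c : K}
    (h : ∀ i ∈ s, |f i - g i| ≤ c) : |∑ i ∈ s, w i * f i - ∑ i ∈ s, w i * g i| ≤ c :=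
  calc |∑ i ∈ s, w i * f i - ∑ i ∈ s, w i * g i|
      = |∑ i ∈ s, w i * (f i - g i)| := by simp only [mul_sub, sum_sub_distrib]
    _ ≤ ∑ i ∈ s, |w i * (f i - g i)| := abs_sum_le_sum_abs _ _
    _ ≤ ∑ i ∈ s, w i * c := sum_le_sum fun i hi => by
        rw [abs_mul, abs_of_nonneg (hw₀ i hi)]
        exact mul_le_mul_of_nonneg_left (h i hi) (hw₀ i hi)
    _ = c := by rw [← sum_mul, hw₁, one_mul]

end WeightedSum

section Normalization

variable {ι K : Type*} [Field K] [LinearOrder K] [IsStrictOrderedRing K] {x : K}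

theorem sup'_affine {s : Finset ι} (hs : s.Nonempty) (f : ι → K) (hx : 0 < x) (c : K) :
    s.sup' hs (fun i => x * f i + c) = x * s.sup' hs f + c :=
  (map_finset_sup' ((OrderIso.mulLeft₀ x hx).trans (OrderIso.addRight c)) hs f).symm

theorem inf'_affine {s : Finset ι} (hs : s.Nonempty) (f : ι → K) (hx : 0 < x) (c : K) :
    s.inf' hs (fun i => x * f i + c) = x * s.inf' hs f + c :=
  (map_finset_inf' ((OrderIso.mulLeft₀ x hx).trans (OrderIso.addRight c)) hs f).symm

/-- Min-max normalization of a finite family, which sends its minimum to `0` and its maximum to `1`;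
applied to `Q*_R(s, ·)` it gives the paper's `Q^•_R(s, ·)`. On a constant family it takes the
junk value `0`. -/
def minMaxNormalize [Fintype ι] [Nonempty ι] (f : ι → K) (i : ι) : K :=
  (f i - univ.inf' univ_nonempty f) / (univ.sup' univ_nonempty f - univ.inf' univ_nonempty f)

theorem minMaxNormalize_affine [Fintype ι] [Nonempty ι] (f : ι → K) (hx : 0 < x) (c : K) :
    minMaxNormalize (fun i => x * f i + c) = minMaxNormalize f := by
  funext i
  simp only [minMaxNormalize, sup'_affine _ f hx, inf'_affine _ f hx, add_sub_add_right_eq_sub,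
    ← mul_sub, mul_div_mul_left _ _ hx.ne']

end Normalization

section Bellman

variable {S A K : Type*} [Fintype S] [Fintype A] [Nonempty A]
  [Field K] [LinearOrder K] [IsStrictOrderedRing K] {T : S → A → S → K} {γ x : K}

/-- The Bellman optimality operator of a finite MDP with kernel `T s a s' = T(s' | s, a)`, whose
fixed point is the optimal state-action value function. The reward may depend on the action; a
state reward `R` is encoded as `fun s _ => R s`. -/
def bellmanOperator (T : S → A → S → K) (r : S → A → K) (γ : K) (Q : S → A → K) : S → A → K :=
  fun s a => r s a + γ * ∑ s', T s a s' * univ.sup' univ_nonempty (Q s')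

theorem bellmanOperator_affine (hT₁ : ∀ s a, ∑ s', T s a s' = 1) (r : S → A → K) (hx : 0 < x)
    (c : K) (Q : S → A → K) :
    bellmanOperator T (fun s a => x * r s a + (1 - γ) * c) γ (fun s a => x * Q s a + c) =
      fun s a => x * bellmanOperator T r γ Q s a + c := by
  funext s a
  simp only [bellmanOperator, sup'_affine _ _ hx, sum_mul_affine (hT₁ s a)]
  ring

theorem isFixedPt_bellmanOperator_affine (hT₁ : ∀ s a, ∑ s', T s a s' = 1) {r Q : S → A → K}
    (hγ : γ ≠ 1) (hx : 0 < x) (y : K) (hQ : Function.IsFixedPt (bellmanOperator T r γ) Q) :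
    Function.IsFixedPt (bellmanOperator T (fun s a => x * r s a + y) γ)
      (fun s a => x * Q s a + y / (1 - γ)) := by
  have h := bellmanOperator_affine (γ := γ) hT₁ r hx (y / (1 - γ)) Q
  rwa [hQ.eq, mul_div_cancel₀ y (sub_ne_zero.2 hγ.symm)] at h

theorem abs_bellmanOperator_sub_le (hT₀ : ∀ s a s', 0 ≤ T s a s')
    (hT₁ : ∀ s a, ∑ s', T s a s' = 1) (r : S → A → K) {P Q : S → A → K} {c : K}
    (h : ∀ s a, |P s a - Q s a| ≤ c) (s : S) (a : A) :
    |bellmanOperator T r γ P s a - bellmanOperator T r γ Q s a| ≤ |γ| * c := by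
  simp only [bellmanOperator, add_sub_add_left_eq_sub, ← mul_sub, abs_mul]
  exact mul_le_mul_of_nonneg_left (abs_sum_mul_sub_sum_mul_le (fun s' _ => hT₀ s a s') (hT₁ s a)
    fun s' _ => abs_sup'_sub_sup'_le _ fun a' _ => h s' a') (abs_nonneg γ)

theorem isFixedPt_bellmanOperator_unique (hT₀ : ∀ s a s', 0 ≤ T s a s')
    (hT₁ : ∀ s a, ∑ s', T s a s' = 1) (hγ : |γ| < 1) {r P Q : S → A → K}
    (hP : Function.IsFixedPt (bellmanOperator T r γ) P)
    (hQ : Function.IsFixedPt (bellmanOperator T r γ) Q) : P = Q := by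
  funext s a
  have : Nonempty S := ⟨s⟩
  obtain ⟨⟨s₀, a₀⟩, hmax⟩ := Finite.exists_max fun p : S × A => |P p.1 p.2 - Q p.1 p.2|
  have hcontract : |P s₀ a₀ - Q s₀ a₀| ≤ |γ| * |P s₀ a₀ - Q s₀ a₀| := by
    simpa only [hP.eq, hQ.eq] using
      abs_bellmanOperator_sub_le (γ := γ) hT₀ hT₁ r (fun s a => hmax (s, a)) s₀ a₀
  have hnonpos : |P s₀ a₀ - Q s₀ a₀| ≤ 0 :=
    not_lt.1 fun hpos => hcontract.not_gt (mul_lt_of_lt_one_left hpos hγ)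
  exact sub_eq_zero.1 (abs_nonpos_iff.1 ((hmax (s, a)).trans hnonpos))

theorem normalizedQ_affine_invariance_general (hT₀ : ∀ s a s', 0 ≤ T s a s')
    (hT₁ : ∀ s a, ∑ s', T s a s' = 1) (hγ : |γ| < 1) (hx : 0 < x) {y : K}
    {r Q Qxy : S → A → K} (hQ : Function.IsFixedPt (bellmanOperator T r γ) Q)
    (hQxy : Function.IsFixedPt (bellmanOperator T (fun s a => x * r s a + y) γ) Qxy)
    (s : S) (a : A) (hnc : ∃ a₁ a₂, Q s a₁ ≠ Q s a₂) :
    (∃ a₁ a₂, Qxy s a₁ ≠ Qxy s a₂) ∧ minMaxNormalize (Q s) a = minMaxNormalize (Qxy s) a := by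
  have hγ₁ : γ ≠ 1 := ((le_abs_self γ).trans_lt hγ).ne
  obtain rfl : Qxy = fun s a => x * Q s a + y / (1 - γ) :=
    isFixedPt_bellmanOperator_unique hT₀ hT₁ hγ hQxy
      (isFixedPt_bellmanOperator_affine hT₁ hγ₁ hx y hQ)
  obtain ⟨a₁, a₂, hne⟩ := hnc
  refine ⟨⟨a₁, a₂, fun heq => hne ?_⟩, by rw [minMaxNormalize_affine (Q s) hx]⟩
  exact mul_left_cancel₀ hx.ne' (add_right_cancel heq)

end Bellman

/-- Proposition 1, Affine Invariance: for every finite MDP with γ ∈ [0,1),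
x ∈ (0,∞), y ∈ ℝ, and every state s and action a such that `Q*_R(s,·)` is non-constant,
`Q*_{xR+y}(s,·)` is also non-constant and the normalized state-action values coincide. -/
theorem normalizedQ_affine_invariance {S A : Type*} [Fintype S] [Fintype A]
    [Nonempty S] [Nonempty A]
    (T : S → A → S → ℝ) (hT0 : ∀ s a s', 0 ≤ T s a s') (hT1 : ∀ s a, ∑ s', T s a s' = 1)
    (R : S → ℝ) (γ : ℝ) (hγ0 : 0 ≤ γ) (hγ1 : γ < 1)
    (x y : ℝ) (hx : 0 < x)
    (Q Qxy : S → A → ℝ)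
    (hQ : ∀ s a, Q s a = R s + γ * ∑ s', T s a s' * univ.sup' univ_nonempty (Q s'))
    (hQxy : ∀ s a, Qxy s a =
      (x * R s + y) + γ * ∑ s', T s a s' * univ.sup' univ_nonempty (Qxy s'))
    (s : S) (a : A)
    (hnc : ∃ a1 a2 : A, Q s a1 ≠ Q s a2) :
    (∃ a1 a2 : A, Qxy s a1 ≠ Qxy s a2) ∧
    (Q s a - univ.inf' univ_nonempty (Q s)) /
        (univ.sup' univ_nonempty (Q s) - univ.inf' univ_nonempty (Q s)) =
      (Qxy s a - univ.inf' univ_nonempty (Qxy s)) /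
        (univ.sup' univ_nonempty (Qxy s) - univ.inf' univ_nonempty (Qxy s)) :=
  normalizedQ_affine_invariance_general (r := fun s _ => R s) hT0 hT1
    (abs_lt.2 ⟨by linarith, hγ1⟩) hx (funext₂ fun s a => (hQ s a).symm)
    (funext₂ fun s a => (hQxy s a).symm) s a hnc
end

section
/- For every finite MDP with discount factor γ ∈ [0,1), every x ∈ (0,∞) and every y ∈ ℝ, if Q : S×A → ℝ is a fixed point of the Bellman optimality operator B_R, then the function (s,a) ↦ x·Q(s,a) + y/(1−γ) is a fixed point of the Bellman optimality operator B_{xR+y}. -/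
/-!
Positive scalings and translations commute with maxima, and a weighted sum with total weight `1`
preserves constants. So scaling `(R, Q)` by `x > 0` scales `B_R Q` by `x`, while shifting `R` by `y`
and `Q` by `c` shifts `B_R Q` by `y + γ * c`; the shift `c = y / (1 - γ)` solves `y + γ * c = c`.
-/

/-- The Bellman optimality operator of a finite MDP:
`(B_R Q)(s,a) = R(s) + γ·∑_{s'} T(s'|s,a)·max_{a'} Q(s',a')`. -/
noncomputable def bellman {S A : Type*} [Fintype S] [Fintype A] [Nonempty A]
    (T : S → A → S → ℝ) (R : S → ℝ) (γ : ℝ) (Q : S → A → ℝ) : S → A → ℝ :=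
  fun s a => R s + γ * ∑ s', T s a s' * (Finset.univ.sup' Finset.univ_nonempty (Q s'))

section Bellman

variable {S A : Type*} [Fintype S] [Fintype A] [Nonempty A]

lemma bellman_const_mul (T : S → A → S → ℝ) (R : S → ℝ) (γ : ℝ) {x : ℝ} (hx : 0 ≤ x)
    (Q : S → A → ℝ) :
    bellman T (fun s => x * R s) γ (fun s a => x * Q s a) =
      fun s a => x * bellman T R γ Q s a := by
  funext s a
  simp only [bellman, ← Finset.mul₀_sup' hx, mul_left_comm _ x, ← Finset.mul_sum, ← mul_add]

lemma bellman_add_const {T : S → A → S → ℝ} (hT : ∀ s a, ∑ s', T s a s' = 1)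
    (R : S → ℝ) (γ y c : ℝ) (Q : S → A → ℝ) :
    bellman T (fun s => R s + y) γ (fun s a => Q s a + c) =
      fun s a => bellman T R γ Q s a + (y + γ * c) := by
  funext s a
  simp only [bellman, ← Finset.sup'_add, mul_add, Finset.sum_add_distrib, ← Finset.sum_mul, hT,
    one_mul]
  exact add_add_add_comm _ _ _ _

theorem bellman_fixedPoint_affine_general {T : S → A → S → ℝ}
    (hT : ∀ s a, ∑ s', T s a s' = 1) (R : S → ℝ) {γ : ℝ} (hγ : γ ≠ 1) {x : ℝ} (hx : 0 < x)
    (y : ℝ) (Q : S → A → ℝ) :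
    bellman T (fun s => x * R s + y) γ (fun s a => x * Q s a + y / (1 - γ)) =
      (fun s a => x * Q s a + y / (1 - γ)) ↔ bellman T R γ Q = Q := by
  have shift_eq : y + γ * (y / (1 - γ)) = y / (1 - γ) := by
    have : 1 - γ ≠ 0 := sub_ne_zero.mpr hγ.symm
    field_simp
    ring
  rw [bellman_add_const hT, bellman_const_mul T R γ hx.le, shift_eq]
  simp only [funext_iff, add_left_inj, mul_right_inj' hx.ne']

end Bellman

/-- if Q is a fixed point of `B_R`, then `(s,a) ↦ x·Q(s,a) + y/(1−γ)`
is a fixed point of `B_{xR+y}`. -/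
theorem bellman_fixedPoint_affine {S A : Type*} [Fintype S] [Fintype A]
    [Nonempty S] [Nonempty A]
    (T : S → A → S → ℝ) (hT0 : ∀ s a s', 0 ≤ T s a s') (hT1 : ∀ s a, ∑ s', T s a s' = 1)
    (R : S → ℝ) (γ : ℝ) (hγ0 : 0 ≤ γ) (hγ1 : γ < 1)
    (x y : ℝ) (hx : 0 < x)
    (Q : S → A → ℝ) (hQ : bellman T R γ Q = Q) :
    bellman T (fun s => x * R s + y) γ (fun s a => x * Q s a + y / (1 - γ)) =
      fun s a => x * Q s a + y / (1 - γ) :=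
  (bellman_fixedPoint_affine_general hT1 R hγ1.ne hx y Q).mpr hQ
end

section
/- Consider a finite MDP with discount factor γ ∈ [0,1) and subgoal reward R_g(s) = C if s = g and 0 otherwise (C > 0). Let Q be the unique fixed point of the Bellman optimality operator B_{R_g}, let π_g : S → A be any greedy policy for Q (i.e., π_g(s) maximizes Q(s,·) for every s), let P be the induced transition matrix P_{s,s'} = T(s'|s,π_g(s)), and let ρ^{π_g}(g|s') = ∑_{t=0}^∞ γ^t (P^t)_{s',g}. Then for all s ∈ S and a ∈ A: Q(s,a) = R_g(s) + γ·C·∑_{s'∈S} T(s'|s,a)·ρ^{π_g}(g|s'). -/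
/-!
Along a greedy policy the Bellman optimality equation becomes the linear equation
`V = R + γ P V`, so `V = (1 - γ P)⁻¹ R`. The matrix `γ P` is a strict contraction for the sup
norm, and the Neumann series of the resolvent is the discounted visitation matrix. Evaluating at
the subgoal reward `R = C · 1_g` selects the column of `g`.
-/

open Finset

section DiscountedVisitation

open scoped Matrix

variable {S : Type*} [Fintype S] [DecidableEq S]

/-- The improper discounted state visitation distribution `ρ(s' | s)` of the chain with transition
matrix `P`, encoded as a matrix whose row `s` is `ρ(· | s)`. An entry whose series diverges has
the value `0`. -/
noncomputable def discountedVisitation (γ : ℝ) (P : Matrix S S ℝ) : Matrix S S ℝ :=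
  Matrix.of fun s s' => ∑' t : ℕ, γ ^ t * (P ^ t) s s'

attribute [local instance] Matrix.linftyOpNormedRing Matrix.linftyOpNormedAlgebra

lemma norm_smul_lt_one_of_sum_abs_le_one {γ : ℝ} (hγ : |γ| < 1) {P : Matrix S S ℝ}
    (hP : ∀ s, ∑ s', |P s s'| ≤ 1) : ‖γ • P‖ < 1 := by
  have hP_norm : ‖P‖ ≤ 1 := by
    rw [Matrix.linfty_opNorm_def]
    refine NNReal.coe_le_one.mpr (Finset.sup_le fun s _ => ?_)
    simpa [← NNReal.coe_le_coe] using hP s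
  calc ‖γ • P‖ = |γ| * ‖P‖ := norm_smul γ P
    _ ≤ |γ| := mul_le_of_le_one_right (abs_nonneg γ) hP_norm
    _ < 1 := hγ

lemma discountedVisitation_eq_tsum_pow {γ : ℝ} {P : Matrix S S ℝ} (h : ‖γ • P‖ < 1) :
    discountedVisitation γ P = ∑' t : ℕ, (γ • P) ^ t := by
  have hsum : HasSum (fun t : ℕ => (γ • P) ^ t) (∑' t : ℕ, (γ • P) ^ t) :=
    (summable_geometric_of_norm_lt_one h).hasSum
  ext s s'
  have hentry := Pi.hasSum.mp (Pi.hasSum.mp hsum s) s'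
  simpa [discountedVisitation, smul_pow] using hentry.tsum_eq

lemma discountedVisitation_mul_one_sub {γ : ℝ} {P : Matrix S S ℝ} (h : ‖γ • P‖ < 1) :
    discountedVisitation γ P * (1 - γ • P) = 1 := by
  rw [discountedVisitation_eq_tsum_pow h]
  exact geom_series_mul_neg _ h

lemma eq_discountedVisitation_mulVec {γ : ℝ} {P : Matrix S S ℝ} (h : ‖γ • P‖ < 1) {R V : S → ℝ}
    (hV : V = R + γ • (P *ᵥ V)) : V = discountedVisitation γ P *ᵥ R := by
  have hR : (1 - γ • P) *ᵥ V = R := by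
    rw [Matrix.sub_mulVec, Matrix.one_mulVec, Matrix.smul_mulVec, sub_eq_iff_eq_add]
    exact hV
  calc V = (discountedVisitation γ P * (1 - γ • P)) *ᵥ V := by
        rw [discountedVisitation_mul_one_sub h, Matrix.one_mulVec]
    _ = discountedVisitation γ P *ᵥ R := by rw [← Matrix.mulVec_mulVec, hR]

end DiscountedVisitation

open scoped Matrix in
theorem subgoal_Q_visitation_decomposition_general {S A : Type*} [Fintype S] [DecidableEq S]
    (T : S → A → S → ℝ) {γ : ℝ} (hγ : |γ| < 1) (R : S → ℝ) (Q : S → A → ℝ)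
    (hQ : ∀ s a, Q s a = R s + γ * ∑ s', T s a s' * ⨆ a', Q s' a')
    (polg : S → A) (hpolg : ∀ s a', Q s a' ≤ Q s (polg s))
    (P : Matrix S S ℝ) (hP : ∀ s s', P s s' = T s (polg s) s')
    (hP_row : ∀ s, ∑ s', |P s s'| ≤ 1) (s : S) (a : A) :
    Q s a = R s + γ * ∑ x, (∑ s', T s a s' * discountedVisitation γ P s' x) * R x := by
  have hsup (s : S) : ⨆ a', Q s a' = Q s (polg s) :=
    IsGreatest.csSup_eq ⟨⟨polg s, rfl⟩, Set.forall_mem_range.mpr (hpolg s)⟩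
  have hV : (fun s => ⨆ a', Q s a') = discountedVisitation γ P *ᵥ R := by
    refine eq_discountedVisitation_mulVec (norm_smul_lt_one_of_sum_abs_le_one hγ hP_row)
      (funext fun s => ?_)
    simpa only [Pi.add_apply, Pi.smul_apply, smul_eq_mul, Matrix.mulVec, dotProduct, hP, hsup]
      using hQ s (polg s)
  calc Q s a
      = R s + γ * (T s a ⬝ᵥ discountedVisitation γ P *ᵥ R) := by
        rw [← hV]
        exact hQ s a
    _ = R s + γ * (T s a ᵥ* discountedVisitation γ P ⬝ᵥ R) := by
        rw [Matrix.dotProduct_mulVec]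

/-- for the subgoal reward `R_g(s) = C·1[s=g]` (C > 0), the optimal
Q-function (fixed point of `B_{R_g}`) satisfies, for any greedy policy `π_g` with
induced transition matrix P and visitation distribution `ρ^{π_g}`,
`Q(s,a) = R_g(s) + γ·C·∑_{s'} T(s'|s,a)·ρ^{π_g}(g|s')`. -/
theorem subgoal_Q_visitation_decomposition {S A : Type*} [Fintype S] [Fintype A]
    [DecidableEq S] [Nonempty S] [Nonempty A]
    (T : S → A → S → ℝ) (hT0 : ∀ s a s', 0 ≤ T s a s') (hT1 : ∀ s a, ∑ s', T s a s' = 1)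
    (γ : ℝ) (hγ0 : 0 ≤ γ) (hγ1 : γ < 1)
    (g : S) (C : ℝ) (hC : 0 < C)
    (Rg : S → ℝ) (hRg : ∀ s, Rg s = if s = g then C else 0)
    (Q : S → A → ℝ)
    (hQ : ∀ s a, Q s a = Rg s + γ * ∑ s', T s a s' * univ.sup' univ_nonempty (Q s'))
    (polg : S → A) (hpolg : ∀ s a', Q s a' ≤ Q s (polg s))
    (P : Matrix S S ℝ) (hP : ∀ s s', P s s' = T s (polg s) s')
    (ρ : S → ℝ) (hρ : ∀ s', ρ s' = ∑' t : ℕ, γ ^ t * (P ^ t) s' g) :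
    ∀ s a, Q s a = Rg s + γ * C * ∑ s', T s a s' * ρ s' := by
  intro s a
  simpa [hRg, hρ, discountedVisitation, mul_assoc, mul_comm C] using
    subgoal_Q_visitation_decomposition_general T (by rwa [abs_of_nonneg hγ0]) Rg Q
      (by simpa only [sup'_univ_eq_ciSup] using hQ) polg hpolg P hP
      (by simp [hP, abs_of_nonneg, hT0, hT1]) s a
end

section
/- For every finite MDP with discount factor γ ∈ [0,1), if Q is the unique fixed point of the Bellman optimality operator B_R and π : S → A is greedy with respect to Q (π(s) maximizes Q(s,·) for every s), then the value function of π equals the optimal value function: V^π_R(s) = max_{a∈A} Q(s,a) for every s ∈ S, where V^π_R is the unique fixed point of the policy evaluation operator (B^π_R V)(s) = R(s) + γ·∑_{s'} T(s'|s,π(s))·V(s'). -/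
open Finset

/-!
Greediness gives `max_a Q s a = Q s (pol s)`, so the Bellman optimality equation at `(s, pol s)`
exhibits the optimal value function as a solution of the policy evaluation equation `V = r + P V`.
Two solutions of that equation differ by some `f` with `P f = f`, and when the absolute row sums of
`P` are below `1`, comparing the two sides at a state where `|f|` is largest forces `f = 0`.
-/

section PolicyEvaluation

open scoped Matrix

variable {K S : Type*} [Ring K] [LinearOrder K] [Fintype S]

theorem abs_mulVec_apply_le [IsOrderedRing K] {n : Type*} (P : Matrix n S K) {f : S → K} {c : K}
    (hf : ∀ s, |f s| ≤ c) (i : n) : |(P *ᵥ f) i| ≤ (∑ s, |P i s|) * c :=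
  calc |∑ s, P i s * f s| ≤ ∑ s, |P i s * f s| := abs_sum_le_sum_abs _ _
    _ = ∑ s, |P i s| * |f s| := sum_congr rfl fun s _ => abs_mul (P i s) (f s)
    _ ≤ ∑ s, |P i s| * c :=
      sum_le_sum fun s _ => mul_le_mul_of_nonneg_left (hf s) (abs_nonneg (P i s))
    _ = (∑ s, |P i s|) * c := (sum_mul _ _ _).symm

variable [IsStrictOrderedRing K]

theorem eq_zero_of_mulVec_eq_self {P : Matrix S S K} (hP : ∀ s, ∑ s', |P s s'| < 1)
    {f : S → K} (hf : P *ᵥ f = f) : f = 0 := by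
  funext s
  have : Nonempty S := ⟨s⟩
  obtain ⟨m, hm⟩ := Finite.exists_max fun s => |f s|
  have hle : |f m| ≤ (∑ s', |P m s'|) * |f m| := by
    simpa only [hf] using abs_mulVec_apply_le P hm m
  have hm0 : |f m| ≤ 0 := by
    by_contra! hpos
    exact hle.not_gt (mul_lt_of_lt_one_left hpos (hP m))
  exact abs_nonpos_iff.mp ((hm s).trans hm0)

theorem eq_of_eq_add_mulVec {P : Matrix S S K} (hP : ∀ s, ∑ s', |P s s'| < 1)
    {r V W : S → K} (hV : V = r + P *ᵥ V) (hW : W = r + P *ᵥ W) : V = W := by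
  refine sub_eq_zero.mp (eq_zero_of_mulVec_eq_self hP ?_)
  calc P *ᵥ (V - W) = (r + P *ᵥ V) - (r + P *ᵥ W) := by
        rw [Matrix.mulVec_sub, add_sub_add_left_eq_sub]
    _ = V - W := by rw [← hV, ← hW]

end PolicyEvaluation

theorem eq_apply_of_isLUB_range {ι α : Type*} [PartialOrder α] {f : ι → α} {b : α} {i : ι}
    (hb : IsLUB (Set.range f) b) (hi : ∀ j, f j ≤ f i) : b = f i :=
  hb.unique (IsGreatest.isLUB ⟨Set.mem_range_self i, Set.forall_mem_range.mpr hi⟩)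

theorem isLUB_range_sup'_univ {ι α : Type*} [Fintype ι] [Nonempty ι] [SemilatticeSup α]
    (f : ι → α) : IsLUB (Set.range f) (univ.sup' univ_nonempty f) :=
  ⟨Set.forall_mem_range.mpr fun i => le_sup' f (mem_univ i),
    fun _ hb => sup'_le _ _ fun i _ => hb (Set.mem_range_self i)⟩

theorem sum_abs_mul_lt_one {K ι : Type*} [Ring K] [LinearOrder K] [IsOrderedRing K]
    [Fintype ι] {γ : K} (hγ0 : 0 ≤ γ) (hγ1 : γ < 1) {p : ι → K} (hp0 : ∀ i, 0 ≤ p i)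
    (hp1 : ∑ i, p i = 1) : ∑ i, |γ * p i| < 1 :=
  calc ∑ i, |γ * p i| = ∑ i, γ * p i :=
        sum_congr rfl fun i _ => abs_of_nonneg (mul_nonneg hγ0 (hp0 i))
    _ = γ := by rw [← mul_sum, hp1, mul_one]
    _ < 1 := hγ1

/-- `P s a s'` plays the role of `γ * T s a s'`, so that the discount factor may depend on the
transition, and `W` is the optimal value function. -/
theorem greedy_policy_achieves_optimal_value_general {K S A : Type*} [Ring K] [LinearOrder K]
    [IsStrictOrderedRing K] [Fintype S] (P : S → A → S → K) (R : S → A → K)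
    (Q : S → A → K) (W : S → K) (hW : ∀ s, IsLUB (Set.range (Q s)) (W s))
    (hQ : ∀ s a, Q s a = R s a + ∑ s', P s a s' * W s')
    (pol : S → A) (hpol : ∀ s a, Q s a ≤ Q s (pol s)) (hP : ∀ s, ∑ s', |P s (pol s) s'| < 1)
    (V : S → K) (hV : ∀ s, V s = R s (pol s) + ∑ s', P s (pol s) s' * V s') : V = W := by
  have hWeval (s : S) : W s = R s (pol s) + ∑ s', P s (pol s) s' * W s' :=
    (eq_apply_of_isLUB_range (hW s) (hpol s)).trans (hQ s (pol s))
  exact eq_of_eq_add_mulVec (P := .of fun s => P s (pol s)) hP (funext hV) (funext hWeval)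

/-- if Q is the fixed point of the Bellman optimality operator and π is
greedy with respect to Q, then the value function of π (the unique fixed point of the
policy evaluation operator) equals the optimal value function `max_a Q(s,a)`. -/
theorem greedy_policy_achieves_optimal_value {S A : Type*} [Fintype S] [Fintype A]
    [Nonempty S] [Nonempty A]
    (T : S → A → S → ℝ) (hT0 : ∀ s a s', 0 ≤ T s a s') (hT1 : ∀ s a, ∑ s', T s a s' = 1)
    (R : S → ℝ) (γ : ℝ) (hγ0 : 0 ≤ γ) (hγ1 : γ < 1)
    (Q : S → A → ℝ)
    (hQ : ∀ s a, Q s a = R s + γ * ∑ s', T s a s' * univ.sup' univ_nonempty (Q s'))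
    (pol : S → A) (hpol : ∀ s a', Q s a' ≤ Q s (pol s))
    (V : S → ℝ) (hV : ∀ s, V s = R s + γ * ∑ s', T s (pol s) s' * V s') :
    ∀ s, V s = univ.sup' univ_nonempty (Q s) := by
  exact congrFun (greedy_policy_achieves_optimal_value_general (fun s a s' => γ * T s a s')
    (fun s _ => R s) Q _ (fun s => isLUB_range_sup'_univ (Q s))
    (by simpa only [mul_sum, mul_assoc] using hQ) pol hpol
    (fun s => sum_abs_mul_lt_one hγ0 hγ1 (hT0 s (pol s)) (hT1 s (pol s))) V
    (by simpa only [mul_sum, mul_assoc] using hV))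
end

section
/- Let P be a row-stochastic matrix indexed by a finite state set S and let j ∈ S be such that for every i ∈ S there exists n ≥ 1 with (P^n)_{i,j} > 0. Let M be the substochastic matrix obtained from P by deleting the row and column of j. Then M^n converges to the zero matrix as n → ∞, the matrix I − M is invertible, and the vector h = (I − M)^{-1}·𝟙 (where 𝟙 is the all-ones vector indexed by S∖{j}) is the unique solution of the expected-hitting-time equations h_i = 1 + ∑_{k∈S, k≠j} P_{i,k}·h_k for all i ∈ S∖{j}. -/
open Finset Matrix

/-!
The `i`-th row sum of `M ^ n` is the probability that the chain started at `i` has not visited `j`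
up to time `n`. It is nonincreasing in `n`, and since the entries of `M ^ n` are at most those of
`P ^ n`, it is at most `1 - (P ^ n) i j`, hence eventually less than `1`. There are finitely many
states, so some power of `M` has all its row sums less than `1`, that is, `L^∞` operator norm less
than `1`. This forces `M ^ n → 0`, and `1 - M` is invertible because it divides `1 - M ^ N`, which
is inverted by a geometric series.
-/

theorem isTopologicallyNilpotent_of_norm_pow_lt_one {R : Type*} [SeminormedRing R] {a : R}
    {N : ℕ} (hN : N ≠ 0) (ha : ‖a ^ N‖ < 1) : IsTopologicallyNilpotent a := by
  have hmod : ∀ n, ‖a ^ (n % N)‖ ≤ ∑ r ∈ range N, ‖a ^ r‖ := fun n =>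
    single_le_sum (f := fun r => ‖a ^ r‖) (fun r _ => norm_nonneg _)
      (mem_range.2 (n.mod_lt hN.pos))
  have hdiv : Filter.Tendsto (fun n => (a ^ N) ^ (n / N)) Filter.atTop (nhds 0) :=
    (tendsto_pow_atTop_nhds_zero_of_norm_lt_one ha).comp (Nat.tendsto_div_const_atTop hN)
  refine (hdiv.zero_mul_isBoundedUnder_le (Filter.isBoundedUnder_of ⟨_, hmod⟩)).congr fun n => ?_
  rw [← pow_mul, ← pow_add, Nat.div_add_mod]

theorem isUnit_one_sub_of_isTopologicallyNilpotent {R : Type*} [NormedRing R]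
    [HasSummableGeomSeries R] {a : R} (ha : IsTopologicallyNilpotent a) : IsUnit (1 - a) := by
  obtain ⟨n, hn⟩ := (ha.norm.eventually_lt_const (by simp : ‖(0 : R)‖ < 1)).exists
  have hcomm : Commute (1 - a) (∑ k ∈ range n, a ^ k) :=
    .sum_right _ _ _ fun k _ => (Commute.one_left _).sub_left (.self_pow a k)
  refine (hcomm.isUnit_mul_iff.1 ?_).1
  rw [mul_neg_geom_sum]
  exact isUnit_one_sub_of_norm_lt_one hn

theorem eq_add_mulVec_iff {n R : Type*} [Fintype n] [DecidableEq n] [CommRing R]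
    {A : Matrix n n R} (hA : IsUnit (1 - A)) {b v : n → R} :
    v = b + A *ᵥ v ↔ v = (1 - A)⁻¹ *ᵥ b := by
  have hdet : IsUnit (1 - A).det := (isUnit_iff_isUnit_det _).1 hA
  rw [← sub_eq_iff_eq_add, show v - A *ᵥ v = (1 - A) *ᵥ v by rw [sub_mulVec, one_mulVec]]
  constructor
  · rintro rfl
    rw [mulVec_mulVec, nonsing_inv_mul _ hdet, one_mulVec]
  · rintro rfl
    rw [mulVec_mulVec, mul_nonsing_inv _ hdet, one_mulVec]

theorem sum_comp_le_sum_of_injective {α β R : Type*} [Fintype α] [Fintype β] [AddCommMonoid R]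
    [PartialOrder R] [IsOrderedAddMonoid R] {f : α → β} (hf : f.Injective) {g : β → R}
    (hg : ∀ b, 0 ≤ g b) : ∑ a, g (f a) ≤ ∑ b, g b :=
  (sum_map univ ⟨f, hf⟩ g).symm.trans_le (sum_le_univ_sum_of_nonneg hg)

theorem mulVec_one_apply {m n R : Type*} [Fintype n] [NonAssocSemiring R] (A : Matrix m n R)
    (i : m) : (A *ᵥ 1) i = ∑ k, A i k := by
  simp only [mulVec, dotProduct_one]

section OrderedSemiring

variable {m n R : Type*} [Fintype n] [Semiring R] [PartialOrder R] [IsOrderedRing R]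

theorem mulVec_le_mulVec_of_nonneg {A : Matrix m n R} (hA : ∀ i k, 0 ≤ A i k) {v w : n → R}
    (hvw : v ≤ w) : A *ᵥ v ≤ A *ᵥ w := fun i =>
  sum_le_sum fun k _ => mul_le_mul_of_nonneg_left (hvw k) (hA i k)

variable [Fintype m] [DecidableEq m] [DecidableEq n]

theorem submatrix_pow_apply_le {A : Matrix n n R} (hA : ∀ i k, 0 ≤ A i k) {f : m → n}
    (hf : f.Injective) (N : ℕ) (i k : m) : (A.submatrix f f ^ N) i k ≤ (A ^ N) (f i) (f k) := by
  induction N generalizing k with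
  | zero => simp [one_apply, hf.eq_iff]
  | succ N ih =>
    simp only [pow_succ, mul_apply, submatrix_apply]
    calc ∑ l, (A.submatrix f f ^ N) i l * A (f l) (f k)
        ≤ ∑ l, (A ^ N) (f i) (f l) * A (f l) (f k) :=
          sum_le_sum fun l _ => mul_le_mul_of_nonneg_right (ih l) (hA _ _)
      _ ≤ ∑ l, (A ^ N) (f i) l * A l (f k) :=
          sum_comp_le_sum_of_injective hf (g := fun l => (A ^ N) (f i) l * A l (f k))
            fun l => mul_nonneg (pow_apply_nonneg hA N _ _) (hA _ _)

/-- The row-substochastic matrices, with nonnegative entries and row sums at most `1`. They are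
the transition matrices of chains that may be killed, and contain the restrictions of stochastic
matrices to a set of states. The bound on the row sums is encoded as `A *ᵥ 1 ≤ 1`. -/
def rowSubstochastic (R n : Type*) [Fintype n] [DecidableEq n] [Semiring R] [PartialOrder R]
    [IsOrderedRing R] : Submonoid (Matrix n n R) where
  carrier := {A | (∀ i k, 0 ≤ A i k) ∧ A *ᵥ 1 ≤ 1}
  mul_mem' {A B} hA hB := by
    refine ⟨fun i k => sum_nonneg fun l _ => mul_nonneg (hA.1 i l) (hB.1 l k), ?_⟩
    rw [← mulVec_mulVec]
    exact (mulVec_le_mulVec_of_nonneg hA.1 hB.2).trans hA.2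
  one_mem' := by simp [zero_le_one_elem]

theorem rowStochastic_le_rowSubstochastic : rowStochastic R n ≤ rowSubstochastic R n :=
  fun _ hA => ⟨hA.1, hA.2.le⟩

variable {A : Matrix n n R}

theorem antitone_pow_mulVec_one (hA : A ∈ rowSubstochastic R n) :
    Antitone fun N : ℕ => A ^ N *ᵥ (1 : n → R) :=
  antitone_nat_of_succ_le fun N => by
    rw [pow_succ, ← mulVec_mulVec]
    exact mulVec_le_mulVec_of_nonneg (pow_mem hA N).1 hA.2

theorem submatrix_mem_rowSubstochastic (hA : A ∈ rowSubstochastic R n) {f : m → n}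
    (hf : f.Injective) : A.submatrix f f ∈ rowSubstochastic R m := by
  refine ⟨fun i k => hA.1 _ _, fun i => ?_⟩
  calc (A.submatrix f f *ᵥ 1) i = ∑ k, A (f i) (f k) := mulVec_one_apply _ _
    _ ≤ ∑ k, A (f i) k := sum_comp_le_sum_of_injective hf (hA.1 _)
    _ = (A *ᵥ 1) (f i) := (mulVec_one_apply _ _).symm
    _ ≤ 1 := hA.2 _

theorem submatrix_pow_mulVec_one_lt_one [IsOrderedCancelAddMonoid R]
    (hA : A ∈ rowSubstochastic R n) {f : m → n} (hf : f.Injective) {N : ℕ} {i : m} {j : n}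
    (hj : j ∉ Set.range f) (hij : 0 < (A ^ N) (f i) j) : (A.submatrix f f ^ N *ᵥ 1) i < 1 := by
  have hAN := pow_mem hA N
  calc (A.submatrix f f ^ N *ᵥ 1) i = ∑ k, (A.submatrix f f ^ N) i k := mulVec_one_apply _ _
    _ ≤ ∑ k, (A ^ N) (f i) (f k) := sum_le_sum fun k _ => submatrix_pow_apply_le hA.1 hf N i k
    _ = ∑ k ∈ univ.map ⟨f, hf⟩, (A ^ N) (f i) k := by simp
    _ < ∑ k, (A ^ N) (f i) k :=
        sum_lt_sum_of_subset (subset_univ _) (mem_univ j) (by simpa using hj) hij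
          fun k _ _ => hAN.1 _ _
    _ = (A ^ N *ᵥ 1) (f i) := (mulVec_one_apply _ _).symm
    _ ≤ 1 := hAN.2 _

end OrderedSemiring

open scoped Matrix.Norms.Operator in
theorem linfty_opNorm_lt_of_mulVec_one_lt {m n : Type*} [Fintype m] [Fintype n]
    {A : Matrix m n ℝ} (hA : ∀ i k, 0 ≤ A i k) {r : ℝ} (hr : 0 < r)
    (hAr : ∀ i, (A *ᵥ 1) i < r) : ‖A‖ < r := by
  lift r to NNReal using hr.le
  rw [linfty_opNorm_def, NNReal.coe_lt_coe, Finset.sup_lt_iff (by exact_mod_cast hr)]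
  intro i _
  rw [← NNReal.coe_lt_coe]
  simpa [mulVec_one_apply, abs_of_nonneg (hA _ _)] using hAr i

theorem isTopologicallyNilpotent_of_mem_rowSubstochastic {n : Type*} [Fintype n]
    [DecidableEq n] {A : Matrix n n ℝ} (hA : A ∈ rowSubstochastic ℝ n)
    (hlt : ∀ i, ∃ N : ℕ, (A ^ N *ᵥ 1) i < 1) : IsTopologicallyNilpotent A := by
  have hev : ∀ i, ∀ᶠ N : ℕ in Filter.atTop, (A ^ N *ᵥ 1) i < 1 := fun i =>
    let ⟨N, hN⟩ := hlt i
    (Filter.eventually_ge_atTop N).mono fun _ hle =>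
      (antitone_pow_mulVec_one hA hle i).trans_lt hN
  obtain ⟨N, hN, hN0⟩ :=
    ((Filter.eventually_all.2 hev).and (Filter.eventually_ne_atTop 0)).exists
  open scoped Matrix.Norms.Operator in
  exact isTopologicallyNilpotent_of_norm_pow_lt_one hN0
    (linfty_opNorm_lt_of_mulVec_one_lt (pow_mem hA N).1 one_pos hN)

/-- `f` embeds the states outside the target set, and `b` is the cost of a step, so that the
equations are those of the expected total cost before the target is hit or the chain is killed. -/
theorem hitting_time_equations_general {S T : Type*} [Fintype S] [DecidableEq S] [Fintype T]
    [DecidableEq T] {P : Matrix S S ℝ} (hP : P ∈ rowSubstochastic ℝ S) {f : T → S}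
    (hf : f.Injective) (hreach : ∀ i, ∃ n : ℕ, ∃ j ∉ Set.range f, 0 < (P ^ n) (f i) j)
    (b : T → ℝ) :
    Filter.Tendsto (fun n : ℕ => P.submatrix f f ^ n) Filter.atTop (nhds 0) ∧
    IsUnit (1 - P.submatrix f f) ∧
    ∀ v, v = b + P.submatrix f f *ᵥ v ↔ v = (1 - P.submatrix f f)⁻¹ *ᵥ b := by
  have hnil : IsTopologicallyNilpotent (P.submatrix f f) :=
    isTopologicallyNilpotent_of_mem_rowSubstochastic (submatrix_mem_rowSubstochastic hP hf)
      fun i =>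
        let ⟨n, _, hj, hij⟩ := hreach i
        ⟨n, submatrix_pow_mulVec_one_lt_one hP hf hj hij⟩
  have hunit : IsUnit (1 - P.submatrix f f) :=
    open scoped Matrix.Norms.Operator in isUnit_one_sub_of_isTopologicallyNilpotent hnil
  exact ⟨hnil, hunit, fun _ => eq_add_mulVec_iff hunit⟩

/-- if from every state the target j is reachable with positive
probability, then the substochastic matrix M (P with row and column j deleted)
satisfies M^n → 0, I − M is invertible, and `h = (I − M)⁻¹·𝟙` is the unique
solution of the expected-hitting-time equations `h_i = 1 + ∑_{k≠j} P_{i,k}·h_k`. -/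
theorem hitting_time_equations {S : Type*} [Fintype S] [DecidableEq S]
    (P : Matrix S S ℝ) (hP0 : ∀ i k, 0 ≤ P i k) (hP1 : ∀ i, ∑ k, P i k = 1)
    (j : S) (hreach : ∀ i, ∃ n : ℕ, 1 ≤ n ∧ 0 < (P ^ n) i j)
    (M : Matrix {i : S // i ≠ j} {i : S // i ≠ j} ℝ)
    (hM : ∀ i k, M i k = P i.1 k.1)
    (h : {i : S // i ≠ j} → ℝ)
    (hh : h = (1 - M)⁻¹ *ᵥ fun _ => (1 : ℝ)) :
    Filter.Tendsto (fun n : ℕ => M ^ n) Filter.atTop (nhds 0) ∧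
    IsUnit (1 - M) ∧
    (∀ i, h i = 1 + ∑ k, P i.1 k.1 * h k) ∧
    (∀ h' : {i : S // i ≠ j} → ℝ,
      (∀ i, h' i = 1 + ∑ k, P i.1 k.1 * h' k) → h' = h) := by
  obtain rfl : M = P.submatrix Subtype.val Subtype.val := Matrix.ext hM
  have hP : P ∈ rowSubstochastic ℝ S :=
    rowStochastic_le_rowSubstochastic (mem_rowStochastic_iff_sum.2 ⟨hP0, hP1⟩)
  obtain ⟨hlim, hunit, hsol⟩ := hitting_time_equations_general hP Subtype.val_injective
    (fun i : {i // i ≠ j} => (hreach i).imp fun _ hn => ⟨j, by simp, hn.2⟩) fun _ => 1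
  exact ⟨hlim, hunit, congrFun ((hsol h).2 hh), fun h' hh' =>
    ((hsol h').1 (funext hh')).trans hh.symm⟩
end
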